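/- (Proposition 5, runner-up reinforcement paradox probability under IAC, complete ballots.) The IAC probability, over complete-ballot profiles with total 1, of the event that some candidate W whose first-place total is not strictly smallest among the three candidates demonstrates a reinforcement paradox (a runner-up reinforcement paradox) equals 127/576. -/

import Mathlib

/-- A three-candidate complete-ballot profile: numbers of ballots with rankings
A≻B≻C, A≻C≻B, B≻A≻C, B≻C≻A, C≻A≻B, C≻B≻A respectively. -/
structure Profile where
  x1 : ℝ
  x2 : ℝ
  y1 : ℝ
  y2 : ℝ
  z1 : ℝ
  z2 : ℝ

namespace Profile

def nonneg (p : Profile) : Prop :=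
  0 ≤ p.x1 ∧ 0 ≤ p.x2 ∧ 0 ≤ p.y1 ∧ 0 ≤ p.y2 ∧ 0 ≤ p.z1 ∧ 0 ≤ p.z2

instance : Add Profile :=
  ⟨fun p q => ⟨p.x1 + q.x1, p.x2 + q.x2, p.y1 + q.y1, p.y2 + q.y2, p.z1 + q.z1, p.z2 + q.z2⟩⟩

/-- First-place total of candidate A. -/
def X (p : Profile) : ℝ := p.x1 + p.x2
/-- First-place total of candidate B. -/
def Y (p : Profile) : ℝ := p.y1 + p.y2
/-- First-place total of candidate C. -/
def Z (p : Profile) : ℝ := p.z1 + p.z2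
/-- Total vote. -/
def V (p : Profile) : ℝ := p.X + p.Y + p.Z

end Profile

inductive Cand | A | B | C

/-- Candidate `W` wins strictly under IRV in profile `p`. -/
def wins : Cand → Profile → Prop
  | Cand.A, p => p.X > p.Y + p.Z ∨
      (p.Z < p.X ∧ p.Z < p.Y ∧ p.X + p.z1 > p.Y + p.z2) ∨
      (p.Y < p.X ∧ p.Y < p.Z ∧ p.X + p.y1 > p.Z + p.y2)
  | Cand.B, p => p.Y > p.X + p.Z ∨
      (p.Z < p.Y ∧ p.Z < p.X ∧ p.Y + p.z2 > p.X + p.z1) ∨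
      (p.X < p.Y ∧ p.X < p.Z ∧ p.Y + p.x1 > p.Z + p.x2)
  | Cand.C, p => p.Z > p.X + p.Y ∨
      (p.X < p.Z ∧ p.X < p.Y ∧ p.Z + p.x2 > p.Y + p.x1) ∨
      (p.Y < p.Z ∧ p.Y < p.X ∧ p.Z + p.y2 > p.X + p.y1)

/-- Profile `p` demonstrates a reinforcement paradox for candidate `W`: there is a
partition `p = p1 + p2` into profiles with nonnegative entries such that `W` wins
strictly in both `p1` and `p2` but `W` does not win strictly in `p`. -/
def paradox (W : Cand) (p : Profile) : Prop :=
  ∃ p1 p2 : Profile, p1.nonneg ∧ p2.nonneg ∧ p1 + p2 = p ∧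
    wins W p1 ∧ wins W p2 ∧ ¬ wins W p

/-- The simplex of complete-ballot profiles with total 1, parameterized by the
first five coordinates (X1, X2, Y1, Y2, Z1). -/
def T : Set (Fin 5 → ℝ) :=
  {v | (∀ i, 0 ≤ v i) ∧ v 0 + v 1 + v 2 + v 3 + v 4 ≤ 1}

/-- The profile with total 1 associated to a point of `T`, with
`Z2 = 1 - (X1 + X2 + Y1 + Y2 + Z1)`. -/
noncomputable def profOf (v : Fin 5 → ℝ) : Profile :=
  ⟨v 0, v 1, v 2, v 3, v 4, 1 - (v 0 + v 1 + v 2 + v 3 + v 4)⟩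

/-- First-place total of a candidate. -/
def fp : Cand → Profile → ℝ
  | Cand.A, p => p.X
  | Cand.B, p => p.Y
  | Cand.C, p => p.Z

/-- Candidate `W`'s first-place total is strictly smallest among the three. -/
def strictlySmallest (W : Cand) (p : Profile) : Prop :=
  ∀ W' : Cand, W' ≠ W → fp W p < fp W' p

/-!
Relabeling the candidates acts on the simplex by affine maps of finite order, which preserve
Lebesgue measure. Outside the null set of profiles with ties, a relabeling therefore reduces the
problem to the case where `C` is eliminated first and `A` then loses to `B`. There `A` demonstrates
a reinforcement paradox exactly when the profile lies in a polytope: `A` has to win one part of the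
partition by eliminating `C` and the other one by eliminating `B`, which forces `Y < X + z1` and
`y2 + z2 < X + y1 + z1`, and these inequalities leave room for a suitable partition. The six
relabelings of the polytope are disjoint. In unimodular coordinates its fibres over the tallies
`(X + z1, X, Y)` are rectangles, and iterated integration gives it volume `127 / 414720`, hence the
probability `6 * 120 * 127 / 414720 = 127 / 576`.
-/

section AddHaar

open MeasureTheory

variable {E : Type*} [NormedAddCommGroup E] [NormedSpace ℝ E] [FiniteDimensional ℝ E]
  [MeasurableSpace E] [BorelSpace E] (μ : Measure E) [μ.IsAddHaarMeasure]

lemma measurePreserving_of_abs_det_eq_one {f : E →ᵃ[ℝ] E} (hf : |LinearMap.det f.linear| = 1) :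
    MeasurePreserving f μ μ := by
  have hdet : LinearMap.det f.linear ≠ 0 := fun h => by simp [h] at hf
  have hlin : MeasurePreserving f.linear μ μ :=
    ⟨f.linear.continuous_of_finiteDimensional.measurable, by
      rw [Measure.map_linearMap_addHaar_eq_smul_addHaar μ hdet, abs_inv, hf, inv_one,
        ENNReal.ofReal_one, one_smul]⟩
  rw [AffineMap.decomp f]
  exact (measurePreserving_add_right μ (f 0)).comp hlin

lemma measurePreserving_of_isOfFinOrder {f : E →ᵃ[ℝ] E} (hf : IsOfFinOrder f) :
    MeasurePreserving f μ μ := by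
  let absDet : (E →ᵃ[ℝ] E) →* ℝ :=
    (absHom : ℝ →*₀ ℝ).toMonoidHom.comp (LinearMap.det.comp AffineMap.linearHom)
  exact measurePreserving_of_abs_det_eq_one μ ((absDet.isOfFinOrder hf).eq_one (abs_nonneg _))

lemma ae_linearMap_ne {f : E →ₗ[ℝ] ℝ} (hf : f ≠ 0) (c : ℝ) : ∀ᵐ v ∂μ, f v ≠ c := by
  let s : AffineSubspace ℝ E := (AffineSubspace.mk' c (⊥ : Submodule ℝ ℝ)).comap f.toAffineMap
  have hs : ∀ v, v ∈ s ↔ f v = c := fun v => by simp [s, sub_eq_zero]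
  have hs_top : s ≠ ⊤ := by
    intro h
    have hfc : ∀ v, f v = c := fun v => (hs v).1 (h ▸ AffineSubspace.mem_top ℝ E v)
    exact hf (LinearMap.ext fun v => by rw [hfc, ← hfc 0, map_zero, LinearMap.zero_apply])
  rw [ae_iff]
  convert Measure.addHaar_affineSubspace μ s hs_top using 2
  ext v
  simp [hs]

end AddHaar

section IteratedIntegral

open MeasureTheory Set

lemma volume_eq_lintegral_cons {n : ℕ} {s : Set (Fin (n + 1) → ℝ)} (hs : MeasurableSet s) :
    volume s = ∫⁻ t, volume {w : Fin n → ℝ | Fin.cons t w ∈ s} := by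
  have h := (volume_preserving_piFinSuccAbove (fun _ : Fin (n + 1) => ℝ) 0).symm
  rw [← h.measure_preimage_equiv, Measure.volume_eq_prod,
    Measure.prod_apply (hs.preimage (MeasurableEquiv.measurable _))]
  simp only [← Fin.insertNth_zero']
  rfl

lemma volume_eq_lintegral_cons_cons_cons {n : ℕ} {s : Set (Fin (n + 3) → ℝ)}
    (hs : MeasurableSet s) :
    volume s = ∫⁻ a, ∫⁻ b, ∫⁻ c,
      volume {w : Fin n → ℝ | (Fin.cons a (Fin.cons b (Fin.cons c w) : Fin (n + 2) → ℝ)) ∈ s} := by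
  rw [volume_eq_lintegral_cons hs]
  refine lintegral_congr fun a => ?_
  have ha : MeasurableSet {w : Fin (n + 2) → ℝ | Fin.cons a w ∈ s} := hs.preimage (by fun_prop)
  rw [volume_eq_lintegral_cons ha]
  refine lintegral_congr fun b => volume_eq_lintegral_cons (ha.preimage ?_)
  fun_prop

lemma lintegral_eq_ofReal_intervalIntegral {f : ℝ → ENNReal} {g : ℝ → ℝ} {l u : ℝ} (hlu : l ≤ u)
    (hg : ContinuousOn g (Icc l u)) (hg_nonneg : ∀ x ∈ Ioo l u, 0 ≤ g x)
    (hf : ∀ x ∈ Ioo l u, f x = ENNReal.ofReal (g x)) (hf_zero : ∀ x ∉ Icc l u, f x = 0) :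
    ∫⁻ x, f x = ENNReal.ofReal (∫ x in l..u, g x) := by
  have hsupp : Function.support f ⊆ Icc l u := Function.support_subset_iff'.2 hf_zero
  rw [← setLIntegral_eq_of_support_subset hsupp, setLIntegral_congr Ioo_ae_eq_Icc.symm,
    setLIntegral_congr_fun measurableSet_Ioo hf, intervalIntegral.integral_of_le hlu,
    integral_Ioc_eq_integral_Ioo, ofReal_integral_eq_lintegral_ofReal]
  · exact (hg.integrableOn_Icc).mono_set Ioo_subset_Icc_self
  · exact (ae_restrict_iff' measurableSet_Ioo).2 (ae_of_all _ hg_nonneg)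

lemma integral_sum_mul_pow {n : ℕ} (c : Fin n → ℝ) (l u : ℝ) :
    ∫ x in l..u, ∑ i, c i * x ^ (i : ℕ) =
      ∑ i, c i * ((u ^ (i + 1 : ℕ) - l ^ (i + 1 : ℕ)) / (i + 1)) := by
  rw [intervalIntegral.integral_finsetSum fun i _ =>
    (by fun_prop : Continuous fun x : ℝ => c i * x ^ (i : ℕ)).intervalIntegrable l u]
  simp only [intervalIntegral.integral_const_mul, integral_pow]

end IteratedIntegral

instance : DecidableEq Cand := fun a b => by
  cases a <;> cases b <;> first | exact isTrue rfl | exact isFalse nofun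

instance : Fintype Cand := ⟨{Cand.A, Cand.B, Cand.C}, by rintro (_ | _ | _) <;> decide⟩

lemma Cand.exists_iff {P : Cand → Prop} : (∃ a, P a) ↔ P Cand.A ∨ P Cand.B ∨ P Cand.C := by
  constructor
  · rintro ⟨a | b | c, h⟩ <;> simp [h]
  · rintro (h | h | h) <;> exact ⟨_, h⟩

lemma Cand.sum_eq {M : Type*} [AddCommMonoid M] (f : Cand → M) :
    ∑ a, f a = f Cand.A + f Cand.B + f Cand.C := by
  rw [add_assoc]
  simp [Finset.univ, Fintype.elems]

lemma Cand.exists_perm {a b c d : Cand} (hab : a ≠ b) (hcd : c ≠ d) :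
    ∃ σ : Equiv.Perm Cand, σ a = c ∧ σ b = d :=
  MulAction.is_two_pretransitive_iff.1 (Equiv.Perm.isMultiplyPretransitive Cand 2) hab hcd

namespace Profile

/-- The number of ballots of `p` ranking `a` first and `b` second; it is `0` when `a = b`. -/
def ballots (p : Profile) : Cand → Cand → ℝ
  | Cand.A, Cand.B => p.x1
  | Cand.A, Cand.C => p.x2
  | Cand.B, Cand.A => p.y1
  | Cand.B, Cand.C => p.y2
  | Cand.C, Cand.A => p.z1
  | Cand.C, Cand.B => p.z2
  | Cand.A, Cand.A | Cand.B, Cand.B | Cand.C, Cand.C => 0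

@[simp]
lemma ballots_self (p : Profile) (a : Cand) : p.ballots a a = 0 := by
  cases a <;> rfl

lemma ext_ballots {p q : Profile} (h : ∀ a b, p.ballots a b = q.ballots a b) : p = q := by
  obtain ⟨⟩ := p
  obtain ⟨⟩ := q
  congr
  exacts [h Cand.A Cand.B, h Cand.A Cand.C, h Cand.B Cand.A, h Cand.B Cand.C, h Cand.C Cand.A,
    h Cand.C Cand.B]

lemma ballots_add (p q : Profile) (a b : Cand) :
    (p + q).ballots a b = p.ballots a b + q.ballots a b := by
  cases a <;> cases b <;> first | rfl | exact (add_zero 0).symm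

lemma nonneg_iff_ballots {p : Profile} : p.nonneg ↔ ∀ a b, 0 ≤ p.ballots a b := by
  constructor
  · rintro ⟨h₁, h₂, h₃, h₄, h₅, h₆⟩ (_ | _ | _) (_ | _ | _) <;>
      first | assumption | exact le_rfl
  · exact fun h => ⟨h Cand.A Cand.B, h Cand.A Cand.C, h Cand.B Cand.A, h Cand.B Cand.C,
      h Cand.C Cand.A, h Cand.C Cand.B⟩

/-- Relabeling of the candidates: the ballots `a ≻ b` of `p` become the ballots `σ a ≻ σ b`
of `σ • p`. -/
instance : SMul (Equiv.Perm Cand) Profile where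
  smul σ p :=
    let n (a b : Cand) : ℝ := p.ballots (σ⁻¹ a) (σ⁻¹ b)
    ⟨n Cand.A Cand.B, n Cand.A Cand.C, n Cand.B Cand.A, n Cand.B Cand.C, n Cand.C Cand.A,
      n Cand.C Cand.B⟩

lemma ballots_smul (σ : Equiv.Perm Cand) (p : Profile) (a b : Cand) :
    (σ • p).ballots a b = p.ballots (σ⁻¹ a) (σ⁻¹ b) := by
  cases a <;> cases b <;> first | rfl | rw [ballots_self, ballots_self]

instance : MulAction (Equiv.Perm Cand) Profile where
  one_smul p := ext_ballots fun a b => by rw [ballots_smul, inv_one]; rfl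
  mul_smul σ τ p := ext_ballots fun a b => by simp only [ballots_smul, mul_inv_rev]; rfl

@[simp]
lemma ballots_smul_apply (σ : Equiv.Perm Cand) (p : Profile) (a b : Cand) :
    (σ • p).ballots (σ a) (σ b) = p.ballots a b := by
  simp [ballots_smul]

protected lemma smul_add (σ : Equiv.Perm Cand) (p q : Profile) : σ • (p + q) = σ • p + σ • q :=
  ext_ballots fun a b => by simp only [ballots_smul, ballots_add]

lemma nonneg_smul {σ : Equiv.Perm Cand} {p : Profile} : (σ • p).nonneg ↔ p.nonneg := by
  simp only [nonneg_iff_ballots, ballots_smul]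
  exact σ⁻¹.forall_congr fun a => σ⁻¹.forall_congr fun b => Iff.rfl

lemma fp_eq_sum_ballots (p : Profile) (a : Cand) : fp a p = ∑ b, p.ballots a b := by
  cases a <;> simp [Cand.sum_eq, fp, X, Y, Z, ballots]

@[simp]
lemma fp_smul_apply (σ : Equiv.Perm Cand) (p : Profile) (a : Cand) :
    fp (σ a) (σ • p) = fp a p := by
  rw [fp_eq_sum_ballots, fp_eq_sum_ballots, ← Equiv.sum_comp σ fun b => (σ • p).ballots (σ a) b]
  simp only [ballots_smul_apply]

lemma V_eq_sum_fp (p : Profile) : p.V = ∑ a, fp a p :=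
  (Cand.sum_eq (fp · p)).symm

@[simp]
lemma V_smul (σ : Equiv.Perm Cand) (p : Profile) : (σ • p).V = p.V := by
  rw [V_eq_sum_fp, V_eq_sum_fp, ← Equiv.sum_comp σ fun a => fp a (σ • p)]
  simp only [fp_smul_apply]

end Profile

section ReinforcementParadox

open Profile

-- Strictness makes `W`, `M`, `L` automatically distinct, so the right-hand side needs no side
-- conditions and is visibly invariant under relabeling.
lemma wins_iff {W : Cand} {p : Profile} :
    wins W p ↔ p.V < 2 * fp W p ∨ ∃ M L, fp L p < fp W p ∧ fp L p < fp M p ∧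
      fp M p + p.ballots L M < fp W p + p.ballots L W := by
  cases W <;>
    simp only [wins, Cand.exists_iff, fp, ballots, V, lt_self_iff_false, false_and, and_false,
      false_or, or_false, gt_iff_lt] <;>
    grind

lemma wins_smul {σ : Equiv.Perm Cand} {W : Cand} {p : Profile} :
    wins (σ W) (σ • p) ↔ wins W p := by
  rw [wins_iff, wins_iff, V_smul, fp_smul_apply]
  refine or_congr_right (σ.exists_congr fun M => σ.exists_congr fun L => ?_).symm
  simp only [fp_smul_apply, ballots_smul_apply]

lemma strictlySmallest_smul {σ : Equiv.Perm Cand} {W : Cand} {p : Profile} :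
    strictlySmallest (σ W) (σ • p) ↔ strictlySmallest W p := by
  refine (σ.forall_congr fun M => ?_).symm
  simp only [fp_smul_apply, ne_eq, EmbeddingLike.apply_eq_iff_eq]

lemma paradox.smul {W : Cand} {p : Profile} (h : paradox W p) (σ : Equiv.Perm Cand) :
    paradox (σ W) (σ • p) := by
  obtain ⟨q, r, hq, hr, rfl, hWq, hWr, hWp⟩ := h
  exact ⟨σ • q, σ • r, nonneg_smul.2 hq, nonneg_smul.2 hr, (Profile.smul_add σ q r).symm,
    wins_smul.2 hWq, wins_smul.2 hWr, wins_smul.not.2 hWp⟩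

lemma paradox_smul {σ : Equiv.Perm Cand} {W : Cand} {p : Profile} :
    paradox (σ W) (σ • p) ↔ paradox W p :=
  ⟨fun h => by simpa using h.smul σ⁻¹, fun h => h.smul σ⟩

lemma strictlySmallest.unique {a b : Cand} {p : Profile} (ha : strictlySmallest a p)
    (hb : strictlySmallest b p) : a = b :=
  of_not_not fun h => lt_asymm (ha b (Ne.symm h)) (hb a h)

/-- No two candidates tie in first-place totals, nor in a run-off after the elimination of the
third one. Only candidates `A` and `B` are compared, after an arbitrary relabeling. -/
def TieFree (p : Profile) : Prop :=
  ∀ σ : Equiv.Perm Cand, (σ • p).X ≠ (σ • p).Y ∧ (σ • p).X + (σ • p).z1 ≠ (σ • p).Y + (σ • p).z2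

lemma TieFree.smul {p : Profile} (h : TieFree p) (σ : Equiv.Perm Cand) : TieFree (σ • p) :=
  fun τ => by simpa only [mul_smul] using h (τ * σ)

lemma TieFree.fp_ne {p : Profile} (h : TieFree p) {a b : Cand} (hab : a ≠ b) :
    fp a p ≠ fp b p := by
  obtain ⟨σ, ha, hb⟩ := Cand.exists_perm hab (show Cand.A ≠ Cand.B by decide)
  have hσ : fp Cand.A (σ • p) ≠ fp Cand.B (σ • p) := (h σ).1
  rwa [← ha, ← hb, fp_smul_apply, fp_smul_apply] at hσ

lemma TieFree.exists_strictlySmallest {p : Profile} (h : TieFree p) :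
    ∃ L, strictlySmallest L p := by
  have : Nonempty Cand := ⟨Cand.A⟩
  obtain ⟨L, hL⟩ := Finite.exists_min (fp · p)
  exact ⟨L, fun M hM => (hL M).lt_of_ne (h.fp_ne hM.symm)⟩

/-- The nonnegative profiles in which `C` is eliminated and `A`, who then loses to `B`, demonstrates
a reinforcement paradox. The last two inequalities are what it takes to split the profile into a
part where `B` is eliminated and a part where `C` is eliminated, with `A` winning both. -/
def paradoxCell : Set Profile :=
  {p | p.nonneg ∧ p.Z < p.X ∧ p.Z < p.Y ∧ p.X + p.z1 < p.Y + p.z2 ∧ p.Y < p.X + p.z1 ∧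
    p.y2 + p.z2 < p.X + p.y1 + p.z1}

lemma wins_A_imp {p : Profile} (h : wins Cand.A p) (hp : p.nonneg) :
    p.Y + p.z2 < p.X + p.z1 ∨ p.Y < p.X ∧ p.Y < p.Z ∧ p.Z + p.y2 < p.X + p.y1 := by
  obtain ⟨-, -, -, -, hz₁, -⟩ := hp
  rcases h with hmaj | hC | hB
  · left
    unfold Z at hmaj
    linarith
  · exact Or.inl hC.2.2
  · exact Or.inr hB

-- The profiles in which `A` beats `B` head to head form a convex cone, so one of the two parts
-- lies outside it, and there `A` wins by eliminating `B`. The other part lies inside it, because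
-- otherwise `B` would trail `C` in `p`.
lemma paradox_A_mem_paradoxCell {p : Profile} (hp : p.nonneg) (hZX : p.Z < p.X)
    (hZY : p.Z < p.Y) (hAB : p.X + p.z1 ≠ p.Y + p.z2) (h : paradox Cand.A p) :
    p ∈ paradoxCell := by
  obtain ⟨q, r, hq, hr, rfl, hAq, hAr, hA⟩ := h
  have hBA : (q + r).X + (q + r).z1 < (q + r).Y + (q + r).z2 :=
    lt_of_le_of_ne (not_lt.1 fun hlt => hA (Or.inr (Or.inl ⟨hZX, hZY, hlt⟩))) hAB
  refine ⟨hp, hZX, hZY, hBA, ?_⟩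
  have hadd : q + r = ⟨q.x1 + r.x1, q.x2 + r.x2, q.y1 + r.y1, q.y2 + r.y2, q.z1 + r.z1,
    q.z2 + r.z2⟩ := rfl
  obtain ⟨-, -, hqy, -, hqz₁, hqz₂⟩ := id hq
  obtain ⟨-, -, hry, -, hrz₁, hrz₂⟩ := id hr
  have hq' := wins_A_imp hAq hq
  have hr' := wins_A_imp hAr hr
  simp only [hadd, X, Y, Z] at hZY hBA hq' hr' ⊢
  rcases hq' with hq' | ⟨hq', hq'', hq'''⟩ <;> rcases hr' with hr' | ⟨hr', hr'', hr'''⟩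
  · linarith
  · constructor <;> linarith
  · constructor <;> linarith
  · linarith

-- `A` wins the part `⟨l * x1, l * x2, α, 0, 0, z2⟩` by eliminating `B`, and the remaining part by
-- eliminating `C`.
lemma paradox_A_of_mem_paradoxCell {p : Profile} (h : p ∈ paradoxCell) : paradox Cand.A p := by
  obtain ⟨x1, x2, y1, y2, z1, z2⟩ := p
  obtain ⟨⟨hx1, hx2, hy1, hy2, hz1, hz2⟩, hZX, hZY, hBA, hYX, hyz⟩ := h
  simp only [X, Y, Z] at hx1 hx2 hy1 hy2 hz1 hz2 hZX hZY hBA hYX hyz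
  obtain ⟨α, hα_lb, hα_ub⟩ : ∃ α, (z2 + y1 + y2 - x1 - x2 - z1) / 2 < α ∧
      α < min (min y1 z2) (min (y1 + y2 - z1) (x1 + x2 - z1)) := by
    apply exists_between
    simp only [lt_min_iff]
    refine ⟨⟨?_, ?_⟩, ?_, ?_⟩ <;> linarith
  obtain ⟨⟨hαy1, _⟩, _, _⟩ := by simpa only [lt_min_iff] using hα_ub
  obtain ⟨t, ht_lb, ht_ub⟩ : ∃ t, max α (z2 - α) < t ∧
      t < min (x1 + x2 - z1) (x1 + x2 + z1 - (y1 + y2) + α) := by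
    apply exists_between
    simp only [lt_min_iff, max_lt_iff]
    refine ⟨⟨?_, ?_⟩, ?_, ?_⟩ <;> linarith
  obtain ⟨hαt, hzt⟩ := max_lt_iff.1 ht_lb
  obtain ⟨htX, htXY⟩ := lt_min_iff.1 ht_ub
  obtain ⟨l, hl0, hl1, hlt⟩ : ∃ l, 0 ≤ l ∧ l ≤ 1 ∧ l * x1 + l * x2 = t := by
    have hX : 0 < x1 + x2 := by linarith
    refine ⟨t / (x1 + x2), div_nonneg (by linarith) hX.le, ?_, ?_⟩
    · rw [div_le_one hX]; linarith
    · rw [← mul_add, div_mul_cancel₀ _ hX.ne']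
  refine ⟨⟨l * x1, l * x2, α, 0, 0, z2⟩, ⟨(1 - l) * x1, (1 - l) * x2, y1 - α, y2, z1, 0⟩,
    ⟨mul_nonneg hl0 hx1, mul_nonneg hl0 hx2, ?_, le_rfl, le_rfl, hz2⟩,
    ⟨mul_nonneg (sub_nonneg.2 hl1) hx1, mul_nonneg (sub_nonneg.2 hl1) hx2, sub_nonneg.2 hαy1.le,
      hy2, hz1, le_rfl⟩, ?_, Or.inr (Or.inr ?_), Or.inr (Or.inl ?_), ?_⟩
  · change 0 ≤ α
    linarith
  · exact Profile.mk.injEq .. ▸ ⟨by ring, by ring, by ring, by ring, by ring, by ring⟩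
  · simp only [X, Y, Z]
    refine ⟨?_, ?_, ?_⟩ <;> linarith
  · simp only [X, Y, Z]
    refine ⟨?_, ?_, ?_⟩ <;> linarith
  · simp only [wins, X, Y, Z]
    rintro (h | ⟨-, -, h⟩ | ⟨_, h, -⟩) <;> linarith

lemma nonneg_and_exists_paradox_iff {p : Profile} (h : TieFree p) :
    p.nonneg ∧ (∃ W, ¬ strictlySmallest W p ∧ paradox W p) ↔
      ∃ σ : Equiv.Perm Cand, σ • p ∈ paradoxCell := by
  constructor
  · rintro ⟨hp, W, hW, hparadox⟩
    obtain ⟨L, hL⟩ := h.exists_strictlySmallest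
    have hWL : W ≠ L := fun hWL => hW (hWL ▸ hL)
    obtain ⟨σ, hσW, hσL⟩ := Cand.exists_perm hWL (show Cand.A ≠ Cand.C by decide)
    have hC : strictlySmallest Cand.C (σ • p) := hσL ▸ strictlySmallest_smul.2 hL
    have hA : paradox Cand.A (σ • p) := hσW ▸ paradox_smul.2 hparadox
    have hAB := (h.smul σ 1).2
    rw [one_smul] at hAB
    exact ⟨σ, paradox_A_mem_paradoxCell (nonneg_smul.2 hp) (hC Cand.A (by decide))
      (hC Cand.B (by decide)) hAB hA⟩
  · rintro ⟨σ, hσ⟩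
    obtain ⟨hp, hZX, -⟩ := id hσ
    refine ⟨nonneg_smul.1 hp, σ.symm Cand.A, ?_, ?_⟩
    · rw [← strictlySmallest_smul (σ := σ), σ.apply_symm_apply]
      exact fun hA => lt_asymm hZX (hA Cand.C (by decide))
    · rw [← paradox_smul (σ := σ), σ.apply_symm_apply]
      exact paradox_A_of_mem_paradoxCell hσ

lemma strictlySmallest_C_of_mem_paradoxCell {p : Profile} (h : p ∈ paradoxCell) :
    strictlySmallest Cand.C p
  | Cand.A, _ => h.2.1
  | Cand.B, _ => h.2.2.1
  | Cand.C, hC => absurd rfl hC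

lemma eq_one_of_smul_mem_paradoxCell {σ : Equiv.Perm Cand} {p : Profile} (hp : p ∈ paradoxCell)
    (hσp : σ • p ∈ paradoxCell) : σ = 1 := by
  have hC : σ Cand.C = Cand.C :=
    (strictlySmallest_smul.2 (strictlySmallest_C_of_mem_paradoxCell hp)).unique
      (strictlySmallest_C_of_mem_paradoxCell hσp)
  have hσ : σ = 1 ∨ σ = Equiv.swap Cand.A Cand.B := by
    clear hσp
    decide +revert
  refine hσ.resolve_right ?_
  rintro rfl
  have hBA : p.X + p.z1 < p.Y + p.z2 := hp.2.2.2.1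
  have hAB : p.y1 + p.y2 + p.z2 < p.x1 + p.x2 + p.z1 := hσp.2.2.2.1
  unfold X Y at hBA
  linarith

end ReinforcementParadox

section Relabeling

open MeasureTheory Profile

lemma mem_T_iff {v : Fin 5 → ℝ} : v ∈ T ↔ (profOf v).nonneg := by
  simp only [T, profOf, nonneg, Set.mem_ofPred_eq, Fin.forall_fin_succ, sub_nonneg]
  simp [and_assoc]

lemma profOf_injective : Function.Injective profOf := by
  intro v w h
  simp only [profOf, Profile.mk.injEq] at h
  obtain ⟨h₀, h₁, h₂, h₃, h₄, -⟩ := h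
  funext i
  fin_cases i <;> assumption

lemma V_profOf (v : Fin 5 → ℝ) : (profOf v).V = 1 := by
  simp only [V, X, Y, Z, profOf]
  ring

lemma profOf_eq_of_V_eq_one {p : Profile} (hp : p.V = 1) :
    profOf ![p.x1, p.x2, p.y1, p.y2, p.z1] = p := by
  obtain ⟨x1, x2, y1, y2, z1, z2⟩ := p
  simp only [V, X, Y, Z] at hp
  simp only [profOf, Profile.mk.injEq, Matrix.cons_val, true_and]
  linarith

lemma exists_affineMap_eq_ballots_profOf (a b : Cand) :
    ∃ g : (Fin 5 → ℝ) →ᵃ[ℝ] ℝ, ∀ v, g v = (profOf v).ballots a b := by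
  let coord (i : Fin 5) : (Fin 5 → ℝ) →ᵃ[ℝ] ℝ := (LinearMap.proj i).toAffineMap
  let one : (Fin 5 → ℝ) →ᵃ[ℝ] ℝ := AffineMap.const ℝ (Fin 5 → ℝ) (1 : ℝ)
  rcases a with _ | _ | _ <;> rcases b with _ | _ | _
  exacts [⟨0, fun v => rfl⟩, ⟨coord 0, fun v => rfl⟩, ⟨coord 1, fun v => rfl⟩,
    ⟨coord 2, fun v => rfl⟩, ⟨0, fun v => rfl⟩, ⟨coord 3, fun v => rfl⟩, ⟨coord 4, fun v => rfl⟩,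
    ⟨one - (coord 0 + coord 1 + coord 2 + coord 3 + coord 4), fun v => rfl⟩, ⟨0, fun v => rfl⟩]

lemma exists_affineMap_profOf_eq_smul (σ : Equiv.Perm Cand) :
    ∃ F : (Fin 5 → ℝ) →ᵃ[ℝ] (Fin 5 → ℝ), ∀ v, profOf (F v) = σ • profOf v := by
  choose g hg using exists_affineMap_eq_ballots_profOf
  let n (a b : Cand) := g (σ⁻¹ a) (σ⁻¹ b)
  refine ⟨AffineMap.pi ![n Cand.A Cand.B, n Cand.A Cand.C, n Cand.B Cand.A, n Cand.B Cand.C,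
    n Cand.C Cand.A], fun v => ?_⟩
  rw [← profOf_eq_of_V_eq_one ((V_smul σ (profOf v)).trans (V_profOf v))]
  congr 1
  funext i
  fin_cases i <;> exact hg _ _ v

lemma exists_measurePreserving_smul_profOf (σ : Equiv.Perm Cand) :
    ∃ F : (Fin 5 → ℝ) → Fin 5 → ℝ,
      MeasurePreserving F volume volume ∧ ∀ v, profOf (F v) = σ • profOf v := by
  obtain ⟨F, hF⟩ := exists_affineMap_profOf_eq_smul σ
  have hF_pow (n : ℕ) (v : Fin 5 → ℝ) : profOf ((F ^ n) v) = σ ^ n • profOf v := by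
    induction n with
    | zero => simp
    | succ n ih => rw [pow_succ', pow_succ', mul_smul, ← ih, ← hF, AffineMap.coe_mul,
        Function.comp_apply]
  have hF_fin : IsOfFinOrder F := by
    obtain ⟨n, hn, hσn⟩ := (isOfFinOrder_of_finite σ).exists_pow_eq_one
    refine isOfFinOrder_iff_pow_eq_one.2 ⟨n, hn, AffineMap.ext fun v => profOf_injective ?_⟩
    rw [hF_pow, hσn, one_smul, AffineMap.coe_one, id]
  exact ⟨F, measurePreserving_of_isOfFinOrder volume hF_fin, hF⟩

lemma ae_X_ne_Y_profOf : ∀ᵐ v, (profOf v).X ≠ (profOf v).Y := by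
  let coord : Fin 5 → (Fin 5 → ℝ) →ₗ[ℝ] ℝ := LinearMap.proj
  let f : (Fin 5 → ℝ) →ₗ[ℝ] ℝ := coord 0 + coord 1 - coord 2 - coord 3
  have hf : f ≠ 0 := fun h => by simpa [f, coord] using LinearMap.congr_fun h (Pi.single 0 1)
  filter_upwards [ae_linearMap_ne volume hf 0] with v hv h
  refine hv ?_
  simp only [X, Y, profOf] at h
  simp only [f, coord, LinearMap.sub_apply, LinearMap.add_apply, LinearMap.proj_apply]
  linarith

lemma ae_X_add_z1_ne_Y_add_z2_profOf :
    ∀ᵐ v, (profOf v).X + (profOf v).z1 ≠ (profOf v).Y + (profOf v).z2 := by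
  let coord : Fin 5 → (Fin 5 → ℝ) →ₗ[ℝ] ℝ := LinearMap.proj
  let f : (Fin 5 → ℝ) →ₗ[ℝ] ℝ := coord 0 + coord 1 + coord 4
  have hf : f ≠ 0 := fun h => by simpa [f, coord] using LinearMap.congr_fun h (Pi.single 0 1)
  filter_upwards [ae_linearMap_ne volume hf (1 / 2)] with v hv h
  refine hv ?_
  simp only [X, Y, profOf] at h
  simp only [f, coord, LinearMap.add_apply, LinearMap.proj_apply]
  linarith

lemma ae_tieFree_profOf : ∀ᵐ v, TieFree (profOf v) := by
  refine ae_all_iff.2 fun σ => ?_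
  obtain ⟨F, hF, hFσ⟩ := exists_measurePreserving_smul_profOf σ
  filter_upwards [hF.quasiMeasurePreserving.ae ae_X_ne_Y_profOf,
    hF.quasiMeasurePreserving.ae ae_X_add_z1_ne_Y_add_z2_profOf] with v hX hXz
  exact hFσ v ▸ ⟨hX, hXz⟩

end Relabeling

section CellVolume

open MeasureTheory Profile Set

/-- The paradox cell in the coordinates `s = X + z1`, `a = X`, `b = Y`, `y1`, `x1`, listed in this
order. The first three determine the tallies of both rounds, and for fixed `s`, `a`, `b` the
conditions on the last two cut out a box. -/
def cellRegion : Set (Fin 5 → ℝ) :=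
  {u | (u 0 < 1 / 2 ∧ u 1 ≤ u 0 ∧ u 2 < u 0 ∧ 1 < 2 * u 1 + u 2 ∧ 1 < u 1 + 2 * u 2) ∧
    u 3 ∈ Ioc (1 / 2 - u 0) (u 2) ∧ u 4 ∈ Icc 0 (u 1)}

lemma measurableSet_cellRegion : MeasurableSet cellRegion := by
  unfold cellRegion
  simp only [mem_Ioc, mem_Icc]
  measurability

lemma exists_measurePreserving_preimage_cellRegion :
    ∃ F : (Fin 5 → ℝ) → Fin 5 → ℝ,
      MeasurePreserving F volume volume ∧ F ⁻¹' cellRegion = {v | profOf v ∈ paradoxCell} := by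
  let M : Matrix (Fin 5) (Fin 5) ℝ :=
    !![1, 1, 0, 0, 1; 1, 1, 0, 0, 0; 0, 0, 1, 1, 0; 0, 0, 1, 0, 0; 1, 0, 0, 0, 0]
  have hM : |LinearMap.det (Matrix.toLin' M)| = 1 := by
    rw [LinearMap.det_toLin']
    simp [M, Matrix.det_succ_row_zero, Fin.sum_univ_succ, Fin.succAbove]
  refine ⟨(Matrix.toLin' M).toAffineMap, measurePreserving_of_abs_det_eq_one volume hM, ?_⟩
  have hMv (v : Fin 5 → ℝ) :
      Matrix.toLin' M v = ![v 0 + v 1 + v 4, v 0 + v 1, v 2 + v 3, v 2, v 0] := by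
    funext i
    fin_cases i <;> simp [M, Matrix.mulVec, dotProduct, Fin.sum_univ_succ, add_assoc]
  ext v
  simp only [mem_preimage, LinearMap.coe_toAffineMap, hMv, cellRegion, paradoxCell, nonneg, X, Y, Z,
    profOf, mem_ofPred_eq, mem_Ioc, mem_Icc, Matrix.cons_val]
  constructor
  · rintro ⟨⟨_, _, _, _, _⟩, ⟨_, _⟩, _, _⟩
    refine ⟨⟨?_, ?_, ?_, ?_, ?_, ?_⟩, ?_, ?_, ?_, ?_, ?_⟩ <;> linarith
  · rintro ⟨⟨_, _, _, _, _, _⟩, _, _, _, _, _⟩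
    refine ⟨⟨?_, ?_, ?_, ?_, ?_⟩, ⟨?_, ?_⟩, ?_, ?_⟩ <;> linarith

/-- The threshold which the first-place total of `B` has to exceed for `C` to be behind both other
candidates, when the first-place total of `A` is `a`. It has a kink at `a = 1 / 3`. -/
noncomputable def minRunnerUp (a : ℝ) : ℝ := max (1 - 2 * a) ((1 - a) / 2)

/-- The volume of the fibre of `cellRegion` over `(s, a)`, for those `(s, a)` over which it is
nonempty. -/
noncomputable def fibreVolume (s a : ℝ) : ℝ :=
  a / 2 * (s - minRunnerUp a) * (3 * s - 1 + minRunnerUp a)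

lemma minRunnerUp_of_le_third {a : ℝ} (ha : a ≤ 1 / 3) : minRunnerUp a = 1 - 2 * a :=
  max_eq_left (by linarith)

lemma minRunnerUp_of_third_le {a : ℝ} (ha : 1 / 3 ≤ a) : minRunnerUp a = (1 - a) / 2 :=
  max_eq_right (by linarith)

lemma minRunnerUp_le {s a : ℝ} (hs : 1 / 3 ≤ s) (ha : (1 - s) / 2 ≤ a) : minRunnerUp a ≤ s :=
  max_le (by linarith) (by linarith)

lemma continuous_fibreVolume (s : ℝ) : Continuous (fibreVolume s) := by
  unfold fibreVolume minRunnerUp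
  fun_prop

lemma fibreVolume_nonneg {s a : ℝ} (hs : s ∈ Icc (1 / 3) 1) (ha : a ∈ Icc ((1 - s) / 2) s) :
    0 ≤ fibreVolume s a := by
  have hm : minRunnerUp a ≤ s := minRunnerUp_le hs.1 ha.1
  have hm' : (1 - a) / 2 ≤ minRunnerUp a := le_max_right _ _
  obtain ⟨-, hs⟩ := hs
  obtain ⟨ha, has⟩ := ha
  refine mul_nonneg (mul_nonneg ?_ ?_) ?_ <;> linarith

/-- The area of the fibre of `cellRegion` over `(s, a, b)`. -/
noncomputable def fibreArea (s a b : ℝ) : ENNReal :=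
  volume {w : Fin 2 → ℝ | (Fin.cons s (Fin.cons a (Fin.cons b w) : Fin 4 → ℝ)) ∈ cellRegion}

lemma fibreArea_eq {s a b : ℝ} (hs : s < 1 / 2) (has : a ≤ s) (hb : b ∈ Ioo (minRunnerUp a) s) :
    fibreArea s a b = ENNReal.ofReal (a * (b + s - 1 / 2)) := by
  obtain ⟨hab, hbs⟩ := hb
  obtain ⟨hab₁, hab₂⟩ := max_lt_iff.1 hab
  have hfibre :
      {w : Fin 2 → ℝ | (Fin.cons s (Fin.cons a (Fin.cons b w) : Fin 4 → ℝ)) ∈ cellRegion} =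
        univ.pi ![Ioc (1 / 2 - s) b, Icc 0 a] := by
    ext w
    simp only [mem_univ_pi, Fin.forall_fin_two]
    exact and_iff_right ⟨hs, has, hbs, show 1 < 2 * a + b by linarith,
      show 1 < a + 2 * b by linarith⟩
  rw [fibreArea, hfibre, volume_pi_pi, Fin.prod_univ_two]
  simp only [Matrix.cons_val_zero, Matrix.cons_val_one, Real.volume_Ioc, Real.volume_Icc]
  rw [← ENNReal.ofReal_mul (by linarith)]
  ring_nf

lemma fibreArea_eq_zero {s a b : ℝ} (h : ¬ (s < 1 / 2 ∧ a ≤ s ∧ b ∈ Ioo (minRunnerUp a) s)) :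
    fibreArea s a b = 0 := by
  refine (congrArg volume (eq_empty_of_forall_notMem ?_)).trans measure_empty
  rintro w ⟨⟨hs, has, hbs, hab₁, hab₂⟩, -⟩
  have hab₁ : 1 < 2 * a + b := hab₁
  have hab₂ : 1 < a + 2 * b := hab₂
  exact h ⟨hs, has, max_lt (by linarith) (by linarith), hbs⟩

lemma lintegral_fibreArea {s a : ℝ} (hs : s < 1 / 2) (has : a ≤ s) (ha : minRunnerUp a ≤ s) :
    ∫⁻ b, fibreArea s a b = ENNReal.ofReal (fibreVolume s a) := by
  have ham : 1 - 2 * a ≤ minRunnerUp a ∧ (1 - a) / 2 ≤ minRunnerUp a := max_le_iff.1 le_rfl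
  rw [lintegral_eq_ofReal_intervalIntegral ha (g := fun b => a * (b + s - 1 / 2)) (by fun_prop)
    (fun b hb => mul_nonneg (by linarith) (by linarith [hb.1]))
    (fun b hb => fibreArea_eq hs has hb)
    (fun b hb => fibreArea_eq_zero fun h => hb (Ioo_subset_Icc_self h.2.2))]
  congr 1
  calc ∫ b in minRunnerUp a..s, a * (b + s - 1 / 2)
      = ∫ b in minRunnerUp a..s, ∑ i, ![a * (s - 1 / 2), a] i * b ^ (i : ℕ) := by
        congr 1 with b
        simp only [Fin.sum_univ_two, Matrix.cons_val, Fin.isValue, Fin.coe_ofNat_eq_mod]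
        ring
    _ = fibreVolume s a := by
        rw [integral_sum_mul_pow, fibreVolume]
        norm_num [Fin.sum_univ_succ]
        ring

lemma lintegral_fibreArea_eq_zero {s a : ℝ} (h : ¬ (s < 1 / 2 ∧ a ≤ s ∧ minRunnerUp a ≤ s)) :
    ∫⁻ b, fibreArea s a b = 0 := by
  refine (lintegral_congr fun b => fibreArea_eq_zero ?_).trans lintegral_zero
  exact fun ⟨hs, has, hb⟩ => h ⟨hs, has, (hb.1.trans hb.2).le⟩

lemma integral_fibreVolume_left {s : ℝ} (hs : 1 / 3 ≤ s) :
    ∫ a in (1 - s) / 2..1 / 3, fibreVolume s a =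
      (3 * s - 1) ^ 2 * (12 + 38 * (3 * s - 1) - 7 * (3 * s - 1) ^ 2) / 7776 := by
  calc ∫ a in (1 - s) / 2..1 / 3, fibreVolume s a
      = ∫ a in (1 - s) / 2..1 / 3,
          ∑ i, ![0, 3 * s * (s - 1) / 2, 2 * s + 1, -2] i * a ^ (i : ℕ) := by
        refine intervalIntegral.integral_congr fun a ha => ?_
        rw [uIcc_of_le (by linarith)] at ha
        simp only [fibreVolume, minRunnerUp_of_le_third ha.2, Fin.sum_univ_four, Matrix.cons_val,
          Fin.isValue, Fin.coe_ofNat_eq_mod]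
        ring
    _ = _ := by
        rw [integral_sum_mul_pow]
        norm_num [Fin.sum_univ_succ]
        ring

lemma integral_fibreVolume_right {s : ℝ} (hs : 1 / 3 ≤ s) :
    ∫ a in 1 / 3..s, fibreVolume s a =
      (3 * s - 1) ^ 2 * (60 + 196 * (3 * s - 1) + 85 * (3 * s - 1) ^ 2) / 7776 := by
  calc ∫ a in 1 / 3..s, fibreVolume s a
      = ∫ a in 1 / 3..s,
          ∑ i, ![0, (s - 1 / 2) * (3 * s - 1 / 2) / 2, s / 2, -1 / 8] i * a ^ (i : ℕ) := by
        refine intervalIntegral.integral_congr fun a ha => ?_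
        rw [uIcc_of_le hs] at ha
        simp only [fibreVolume, minRunnerUp_of_third_le ha.1, Fin.sum_univ_four, Matrix.cons_val,
          Fin.isValue, Fin.coe_ofNat_eq_mod]
        ring
    _ = _ := by
        rw [integral_sum_mul_pow]
        norm_num [Fin.sum_univ_succ]
        ring

lemma lintegral_lintegral_fibreArea {s : ℝ} (hs : s ∈ Ico (1 / 3) (1 / 2)) :
    ∫⁻ a, ∫⁻ b, fibreArea s a b = ENNReal.ofReal
      ((3 * s - 1) ^ 2 * (12 + 39 * (3 * s - 1) + 13 * (3 * s - 1) ^ 2) / 1296) := by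
  obtain ⟨hs₁, hs₂⟩ := hs
  have h_integrable (l u : ℝ) : IntervalIntegrable (fibreVolume s) volume l u :=
    (continuous_fibreVolume s).intervalIntegrable l u
  rw [lintegral_eq_ofReal_intervalIntegral (l := (1 - s) / 2) (u := s) (by linarith)
      (continuous_fibreVolume s).continuousOn,
    ← intervalIntegral.integral_add_adjacent_intervals (h_integrable _ (1 / 3)) (h_integrable _ _),
    integral_fibreVolume_left hs₁, integral_fibreVolume_right hs₁]
  · ring_nf
  · exact fun a ha => fibreVolume_nonneg ⟨hs₁, by linarith⟩ (Ioo_subset_Icc_self ha)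
  · exact fun a ha => lintegral_fibreArea hs₂ ha.2.le (minRunnerUp_le hs₁ ha.1.le)
  · refine fun a ha => lintegral_fibreArea_eq_zero fun ⟨_, has, hms⟩ => ha ⟨?_, has⟩
    linarith [(max_le_iff.1 hms).1, (max_le_iff.1 hms).2]

lemma lintegral_lintegral_fibreArea_eq_zero {s : ℝ} (hs : s ∉ Icc (1 / 3) (1 / 2)) :
    ∫⁻ a, ∫⁻ b, fibreArea s a b = 0 := by
  refine (lintegral_congr fun a => lintegral_fibreArea_eq_zero ?_).trans lintegral_zero
  rintro ⟨hs₂, has, hms⟩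
  refine hs ⟨?_, hs₂.le⟩
  linarith [(max_le_iff.1 hms).2]

lemma volume_cellRegion : volume cellRegion = ENNReal.ofReal (127 / 414720) := by
  rw [volume_eq_lintegral_cons_cons_cons measurableSet_cellRegion]
  change ∫⁻ s, ∫⁻ a, ∫⁻ b, fibreArea s a b = _
  rw [lintegral_eq_ofReal_intervalIntegral (l := 1 / 3) (u := 1 / 2) (by norm_num) (by fun_prop)
    (fun s hs => ?_) (fun s hs => lintegral_lintegral_fibreArea (Ioo_subset_Ico_self hs))
    (fun s hs => lintegral_lintegral_fibreArea_eq_zero hs)]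
  · congr 1
    calc ∫ s in (1 / 3 : ℝ)..1 / 2,
          (3 * s - 1) ^ 2 * (12 + 39 * (3 * s - 1) + 13 * (3 * s - 1) ^ 2) / 1296
        = ∫ s in (1 / 3 : ℝ)..1 / 2,
            ∑ i, ![-7 / 648, 41 / 432, -3 / 16, -13 / 48, 13 / 16] i * s ^ (i : ℕ) := by
          congr 1 with s
          simp only [Fin.sum_univ_five, Matrix.cons_val, Fin.isValue, Fin.coe_ofNat_eq_mod]
          ring
      _ = 127 / 414720 := by
          rw [integral_sum_mul_pow]
          norm_num [Fin.sum_univ_succ]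
  · have : 0 ≤ 3 * s - 1 := by linarith [hs.1]
    positivity

lemma volume_preimage_paradoxCell (σ : Equiv.Perm Cand) :
    volume {v | σ • profOf v ∈ paradoxCell} = ENNReal.ofReal (127 / 414720) := by
  obtain ⟨F, hF, hFσ⟩ := exists_measurePreserving_smul_profOf σ
  obtain ⟨G, hG, hGcell⟩ := exists_measurePreserving_preimage_cellRegion
  have hset : {v | σ • profOf v ∈ paradoxCell} = (G ∘ F) ⁻¹' cellRegion := by
    simp only [preimage_comp, hGcell, preimage_ofPred_eq, hFσ]
  rw [hset, (hG.comp hF).measure_preimage measurableSet_cellRegion.nullMeasurableSet,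
    volume_cellRegion]

lemma measurableSet_preimage_paradoxCell (σ : Equiv.Perm Cand) :
    MeasurableSet {v | σ • profOf v ∈ paradoxCell} := by
  obtain ⟨F, hF, hFσ⟩ := exists_measurePreserving_smul_profOf σ
  obtain ⟨G, hG, hGcell⟩ := exists_measurePreserving_preimage_cellRegion
  simpa only [hGcell, preimage_ofPred_eq, hFσ] using
    hF.measurable (hG.measurable measurableSet_cellRegion)

lemma pairwise_disjoint_preimage_paradoxCell :
    Pairwise (Function.onFun Disjoint fun σ : Equiv.Perm Cand =>
      {v | σ • profOf v ∈ paradoxCell}) := by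
  refine fun σ τ hστ => disjoint_left.2 fun v hσ hτ => hστ ?_
  have h : (τ * σ⁻¹) • σ • profOf v ∈ paradoxCell := by rwa [smul_smul, inv_mul_cancel_right]
  exact (mul_inv_eq_one.1 (eq_one_of_smul_mem_paradoxCell hσ h)).symm

end CellVolume

theorem stmt16 :
    MeasureTheory.volume
      {v ∈ T | ∃ W : Cand, ¬ strictlySmallest W (profOf v) ∧ paradox W (profOf v)} =
      (127 / 576) * (1 / 120 : ENNReal) := by
  have hevent : {v ∈ T | ∃ W, ¬ strictlySmallest W (profOf v) ∧ paradox W (profOf v)}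
      =ᵐ[MeasureTheory.volume] ⋃ σ : Equiv.Perm Cand, {v | σ • profOf v ∈ paradoxCell} := by
    refine Filter.eventuallyEq_set.2 (ae_tieFree_profOf.mono fun v hv => ?_)
    rw [Set.mem_iUnion, Set.mem_ofPred_eq, mem_T_iff]
    exact nonneg_and_exists_paradox_iff hv
  rw [MeasureTheory.measure_congr hevent, MeasureTheory.measure_iUnion
    pairwise_disjoint_preimage_paradoxCell measurableSet_preimage_paradoxCell]
  have hcard : Fintype.card (Equiv.Perm Cand) = 6 := by decide
  simp only [volume_preimage_paradoxCell, tsum_fintype, Finset.sum_const, Finset.card_univ, hcard,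
    nsmul_eq_mul]
  rw [← ENNReal.toReal_eq_toReal_iff' (by finiteness) (by finiteness)]
  norm_num
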